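/- arXiv:1110.0292 — 9 statements merged into one kernel-verified Lean document; each statement's English description precedes it below -/
import Mathlib

section
/- For every positive integer n there exists M ≥ 0 such that for all m ≥ M one has Σ_{a ∈ A_m} i(a)·a^n = 0 in 𝔽_q[T], where i(a) ∈ ℤ/pℤ = 𝔽_p is viewed as an element of 𝔽_q. -/
open Polynomial in
theorem aux_sum {F : Type*} [Field F] [Fintype F] (k : ℕ) : ∀ (n : ℕ) (_ : n < k) (b : F[X])
    (t : Fin k → F[X]), ∑ c : Fin k → F, (b + ∑ i, C (c i) * t i) ^ n = 0 := by
  induction k with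
  | zero => intro n hn; omega
  | succ k ih =>
    intro n hn b t
    rw [← (Fin.consEquiv (fun _ : Fin (k+1) => F)).sum_comp, Fintype.sum_prod_type]
    have h : ∀ (x : F) (y : Fin k → F),
        (b + ∑ i, C ((Fin.consEquiv (fun _ : Fin (k+1) => F)) (x, y) i) * t i) ^ n
        = ∑ j ∈ Finset.range (n+1), (C x * t 0) ^ j *
            (b + ∑ i, C (y i) * t i.succ) ^ (n - j) * (n.choose j : F[X]) := by
      intro x y
      rw [← add_pow]
      simp [Fin.consEquiv, Fin.sum_univ_succ]
      ring
    simp_rw [h]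
    have h2 : ∀ x : F, ∑ y : Fin k → F, ∑ j ∈ Finset.range (n+1), (C x * t 0) ^ j *
            (b + ∑ i, C (y i) * t i.succ) ^ (n - j) * (n.choose j : F[X])
        = ∑ y : Fin k → F, (b + ∑ i, C (y i) * t i.succ) ^ n := by
      intro x
      rw [Finset.sum_comm, Finset.sum_range_succ']
      rw [Finset.sum_eq_zero]
      · simp
      · intro j hj
        rw [Finset.mem_range] at hj
        rw [← Finset.sum_mul, ← Finset.mul_sum, ih _ (by omega)]
        simp
    simp_rw [h2]
    have hc : ((Fintype.card F : ℕ) : F[X]) = 0 := by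
      rw [← C_eq_natCast, FiniteField.cast_card_eq_zero, C_0]
    rw [Finset.sum_const, Finset.card_univ, nsmul_eq_mul, hc, zero_mul]

open Polynomial in
theorem aux_deg {F : Type*} [Field F] (m : ℕ) (c : Fin m → F) :
    (∑ i : Fin m, C (c i) * X ^ (i : ℕ)).degree < (m : WithBot ℕ) := by
  refine (degree_sum_le _ _).trans_lt ?_
  refine (Finset.sup_lt_iff (WithBot.bot_lt_coe m)).2 ?_
  intro i _
  exact (degree_C_mul_X_pow_le _ _).trans_lt (WithBot.coe_lt_coe.2 i.2)

open Polynomial in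
theorem aux_coeff {F : Type*} [Field F] (m : ℕ) (c : Fin m → F) (j : Fin m) :
    (X ^ m + ∑ i : Fin m, C (c i) * X ^ (i : ℕ)).coeff j = c j := by
  have := j.2.ne
  simp [coeff_X_pow, this, Fin.val_inj]

open Polynomial in
theorem aux_bij {F : Type*} [Field F] (m : ℕ) :
    Set.BijOn (fun c : Fin m → F => X ^ m + ∑ i, C (c i) * X ^ (i : ℕ)) Set.univ
      {a : F[X] | a.Monic ∧ a.natDegree = m} := by
  refine ⟨fun c _ => ⟨monic_X_pow_add (aux_deg m c), ?_⟩, ?_, ?_⟩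
  · apply natDegree_eq_of_degree_eq_some
    rw [degree_add_eq_left_of_degree_lt] <;> rw [degree_X_pow]
    exact aux_deg m c
  · intro c _ d _ h
    funext j
    rw [← aux_coeff m c j, ← aux_coeff m d j]
    exact congrArg (fun f => coeff f j) h
  · rintro a ⟨ha, rfl⟩
    refine ⟨fun i => a.coeff i, trivial, ?_⟩
    conv_rhs => rw [ha.as_sum]
    simp only
    rw [Fin.sum_univ_eq_sum_range (fun i => C (a.coeff i) * X ^ i)]

/-- For every positive integer `n` there exists `M ≥ 0` such that for all `m ≥ M` one has
`Σ_{a ∈ A_m} i(a)·a^n = 0` in `𝔽_q[T]`, where `A_m` is the (finite) set of monic polynomials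
of degree `m` and `i(a) = Tr_{𝔽_q/𝔽_p}(a.nextCoeff) ∈ ℤ/pℤ` is viewed in `𝔽_q`. -/
theorem stmt_1 (p s : ℕ) [Fact p.Prime] (F : Type*) [Field F] [Fintype F]
    [Algebra (ZMod p) F] (hq : Fintype.card F = p ^ s) (n : ℕ) (hn : 0 < n) :
    ∃ M : ℕ, ∀ m ≥ M,
      (∑ᶠ a ∈ {a : Polynomial F | a.Monic ∧ a.natDegree = m},
        Polynomial.C (algebraMap (ZMod p) F (Algebra.trace (ZMod p) F a.nextCoeff)) * a ^ n)
        = 0 := by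
  refine ⟨n + 2, fun m hm => ?_⟩
  obtain ⟨k, rfl⟩ : ∃ k, m = k + 1 := ⟨m - 1, by omega⟩
  have hb := aux_bij (F := F) (k + 1)
  rw [← finsum_mem_eq_of_bijOn (f := fun c : Fin (k+1) → F =>
    Polynomial.C (algebraMap (ZMod p) F (Algebra.trace (ZMod p) F (c (Fin.last k)))) *
      (Polynomial.X ^ (k+1) + ∑ i, Polynomial.C (c i) * Polynomial.X ^ (i : ℕ)) ^ n) _ hb]
  · rw [finsum_mem_univ, finsum_eq_sum_of_fintype,
      ← (Fin.snocEquiv (fun _ : Fin (k+1) => F)).sum_comp, Fintype.sum_prod_type]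
    refine Finset.sum_eq_zero fun x _ => ?_
    simp only [Fin.snocEquiv, Equiv.coe_fn_mk, Fin.sum_univ_castSucc, Fin.snoc_last,
      Fin.snoc_castSucc]
    rw [← Finset.mul_sum]
    have := aux_sum (F := F) k n (by omega)
      (Polynomial.X ^ (k+1) + Polynomial.C x * Polynomial.X ^ k) (fun i => Polynomial.X ^ (i : ℕ))
    convert mul_zero _ using 2
    rw [← this]
    refine Finset.sum_congr rfl fun y _ => ?_
    simp only [Fin.val_castSucc, Fin.val_last]
    ring
  · intro c _
    have h1 := (hb.mapsTo (Set.mem_univ c)).2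
    have h2 := aux_coeff (k+1) c (Fin.last k)
    beta_reduce at h1
    rw [Polynomial.nextCoeff_of_natDegree_pos (by omega), h1, ← h2]
    simp only [Fin.val_last, Nat.add_sub_cancel]
end

section
/- For every positive integer n not divisible by q−1 there exists M ≥ 0 such that for all m ≥ M one has Σ_{a ∈ A_m} a^n = 0 in 𝔽_q[T]. -/
open Polynomial in
/-- Iterated finite sums over a box of dimension `m` kill all powers below `m`. -/
theorem box_sum_eq_zero {F : Type*} [Field F] [Fintype F] (m : ℕ) :
    ∀ (k : ℕ), k < m → ∀ (w : Fin m → F[X]) (x : F[X]),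
      ∑ c : Fin m → F, (x + ∑ i, C (c i) * w i) ^ k = 0 := by
  induction m with
  | zero => intro k hk; omega
  | succ m ih =>
    intro k hk w x
    rw [← (Fin.consEquiv (fun _ : Fin (m + 1) => F)).sum_comp, Fintype.sum_prod_type]
    have h1 : ∀ (a : F) (c : Fin m → F),
        (x + ∑ i, C ((Fin.consEquiv (fun _ : Fin (m + 1) => F)) (a, c) i) * w i) ^ k
        = ∑ j ∈ Finset.range (k + 1),
          ((C a * w 0) ^ (k - j) * (k.choose j : F[X])) * (x + ∑ i, C (c i) * w i.succ) ^ j := by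
      intro a c
      rw [Fin.sum_univ_succ]
      simp only [Fin.consEquiv_apply, Fin.cons_zero, Fin.cons_succ]
      rw [show ∀ u v w : F[X], u + (v + w) = (u + w) + v from fun u v w => by ring, add_pow]
      exact Finset.sum_congr rfl fun j _ => by ring
    simp only [h1]
    have h2 : ∀ a : F, ∑ c : Fin m → F, ∑ j ∈ Finset.range (k + 1),
          ((C a * w 0) ^ (k - j) * (k.choose j : F[X])) * (x + ∑ i, C (c i) * w i.succ) ^ j
        = ∑ c : Fin m → F, (x + ∑ i, C (c i) * w i.succ) ^ k := by
      intro a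
      rw [Finset.sum_comm, Finset.sum_range_succ, Finset.sum_eq_zero, zero_add]
      · simp
      · intro j hj
        rw [← Finset.mul_sum, ih j (by have := Finset.mem_range.1 hj; omega), mul_zero]
    simp only [h2, Finset.sum_const, Finset.card_univ, nsmul_eq_mul]
    have : ((Fintype.card F : ℕ) : F[X]) = 0 := by
      rw [← C_eq_natCast, Nat.cast_card_eq_zero, C_0]
    rw [this, zero_mul]


/-- For every positive integer `n` not divisible by `q - 1` there exists `M ≥ 0` such that for
all `m ≥ M` one has `Σ_{a ∈ A_m} a^n = 0` in `𝔽_q[T]`, where `A_m` is the (finite) set of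
monic polynomials of degree `m`. -/
theorem stmt_2 (p s : ℕ) [Fact p.Prime] (F : Type*) [Field F] [Fintype F]
    (hq : Fintype.card F = p ^ s) (n : ℕ) (hn : 0 < n)
    (hndvd : ¬ (Fintype.card F - 1) ∣ n) :
    ∃ M : ℕ, ∀ m ≥ M,
      (∑ᶠ a ∈ {a : Polynomial F | a.Monic ∧ a.natDegree = m}, a ^ n) = 0 := by
  classical
  refine ⟨n + 1, fun m hm => ?_⟩
  set g : (Fin m → F) → Polynomial F :=
    fun c => Polynomial.X ^ m + ∑ i, Polynomial.C (c i) * Polynomial.X ^ (i : ℕ) with hg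
  have hdeg : ∀ c : Fin m → F,
      (∑ i, Polynomial.C (c i) * Polynomial.X ^ (i : ℕ)).degree < (m : WithBot ℕ) :=
    fun c => Polynomial.degree_sum_fin_lt c
  have hinj : Function.Injective g := by
    intro c d h
    have h' := add_left_cancel h
    funext j
    have := congrArg (fun r => Polynomial.coeff r (j : ℕ)) h'
    simpa [Polynomial.finsetSum_coeff, Polynomial.coeff_C_mul, Polynomial.coeff_X_pow,
      Fin.val_inj] using this
  have hset : {a : Polynomial F | a.Monic ∧ a.natDegree = m} = Set.range g := by
    ext a
    constructor
    · rintro ⟨ha, hd⟩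
      refine ⟨fun i => a.coeff i, ?_⟩
      have := ha.as_sum
      rw [hd] at this
      rw [hg]
      simp only
      rw [Fin.sum_univ_eq_sum_range (fun i => Polynomial.C (a.coeff i) * Polynomial.X ^ i) m]
      exact this.symm
    · rintro ⟨c, rfl⟩
      refine ⟨Polynomial.monic_X_pow_add (hdeg c), ?_⟩
      apply Polynomial.natDegree_eq_of_degree_eq_some
      rw [hg]
      simp only
      rw [Polynomial.degree_add_eq_left_of_degree_lt] <;> rw [Polynomial.degree_X_pow]
      exact hdeg c
  rw [hset, finsum_mem_range hinj, finsum_eq_sum_of_fintype]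
  exact box_sum_eq_zero m n (by omega) (fun i => Polynomial.X ^ (i : ℕ)) (Polynomial.X ^ m)
end

section
/- Let P ∈ 𝔽_q[T] be monic irreducible of degree d with i(P) ≠ 0. Then the polynomial Q(T) = P(T^p − T), i.e. the composition of P with T^p − T, is monic irreducible of degree p·d in 𝔽_q[T]. -/
open Polynomial in
/-- Artin–Schreier polynomials with constant term of nonzero trace are irreducible. -/
theorem artinSchreier_irreducible (p : ℕ) [Fact p.Prime] (K : Type*) [Field K] [Finite K]
    [Algebra (ZMod p) K] (a : K) (ha : Algebra.trace (ZMod p) K a ≠ 0) :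
    Irreducible (X ^ p - X - C a : K[X]) := by
  have hp : p.Prime := Fact.out
  have : Fintype K := Fintype.ofFinite K
  have hdeg : (X ^ p - X - C a : K[X]).natDegree = p := by
    rw [natDegree_sub_C]
    exact FiniteField.X_pow_card_sub_X_natDegree_eq K hp.one_lt
  have h0 : (X ^ p - X - C a : K[X]) ≠ 0 := by
    intro h
    rw [h, natDegree_zero] at hdeg
    exact hp.ne_zero hdeg.symm
  have hu : ¬ IsUnit (X ^ p - X - C a : K[X]) := by
    intro h
    have := natDegree_eq_zero_of_isUnit h
    exact hp.ne_zero (hdeg.symm.trans this)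
  obtain ⟨g, hg, hgd⟩ := WfDvdMonoid.exists_irreducible_factor hu h0
  suffices p ≤ g.natDegree from
    (associated_of_dvd_of_natDegree_le hgd h0 (hdeg.le.trans this)).irreducible hg
  have := Fact.mk hg
  have hKp : CharP K p := charP_of_injective_algebraMap (algebraMap (ZMod p) K).injective p
  have hLp : CharP (AdjoinRoot g) p :=
    charP_of_injective_algebraMap (algebraMap K (AdjoinRoot g)).injective p
  set β := AdjoinRoot.root g with hβ
  have hβg : aeval β g = 0 := AdjoinRoot.eval₂_root g
  have hβ1 : β ^ p = β + algebraMap K _ a := by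
    have := aeval_eq_zero_of_dvd_aeval_eq_zero hgd hβg
    simp only [map_sub, map_pow, aeval_X, aeval_C] at this
    linear_combination this
  have hpow : ∀ k : ℕ, β ^ (p ^ k) =
      β + algebraMap K _ (∑ i ∈ Finset.range k, a ^ (p ^ i)) := by
    intro k
    induction k with
    | zero => simp
    | succ k ih =>
      rw [pow_succ', pow_mul, hβ1, add_pow_char_pow, ih, Finset.sum_range_succ, map_add, map_pow,
        add_assoc]
  set c : K := algebraMap (ZMod p) K (Algebra.trace (ZMod p) K a) with hc
  have hc0 : c ≠ 0 := by simpa [hc] using ha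
  have hfr : β ^ Fintype.card K = β + algebraMap K _ c := by
    have h1 : Fintype.card K = p ^ Module.finrank (ZMod p) K := by
      rw [Module.card_eq_pow_finrank (K := ZMod p) (V := K), ZMod.card]
    rw [h1, hpow, hc, FiniteField.algebraMap_trace_eq_sum_pow]
    simp
  have hroot : ∀ n : ℕ, aeval (β + (n : AdjoinRoot g) * algebraMap K _ c) g = 0 := by
    intro n
    induction n with
    | zero => simpa using hβg
    | succ n ih =>
      have h2 := congrArg (FiniteField.frobeniusAlgHom K (AdjoinRoot g)) ih
      rw [← aeval_algHom_apply, map_zero, map_add, map_mul, map_natCast, AlgHom.commutes] at h2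
      rw [FiniteField.coe_frobeniusAlgHom] at h2
      beta_reduce at h2
      rw [hfr] at h2
      rw [← h2]
      congr 2
      push_cast
      ring
  have hinj : Set.InjOn (fun n : ℕ => β + (n : AdjoinRoot g) * algebraMap K _ c)
      (Finset.range p : Finset ℕ) := by
    intro m hm n hn h
    have hc' : algebraMap K (AdjoinRoot g) c ≠ 0 := by simpa using hc0
    have h3 := mul_right_cancel₀ hc' (add_left_cancel h)
    exact CharP.natCast_injOn_Iio (AdjoinRoot g) p (by simpa using hm) (by simpa using hn) h3
  classical
  calc p = ((Finset.range p).image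
        (fun n : ℕ => β + (n : AdjoinRoot g) * algebraMap K _ c)).card := by
        rw [Finset.card_image_of_injOn hinj, Finset.card_range]
    _ ≤ (g.map (algebraMap K (AdjoinRoot g))).natDegree := by
        apply card_le_degree_of_subset_roots
        intro x hx
        rw [Finset.mem_val, Finset.mem_image] at hx
        obtain ⟨n, -, rfl⟩ := hx
        rw [mem_roots (map_ne_zero hg.ne_zero), IsRoot, eval_map_algebraMap]
        exact hroot n
    _ = g.natDegree := natDegree_map _

/-- Let `P ∈ 𝔽_q[T]` be monic irreducible of degree `d` with `i(P) ≠ 0`, where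
`i(P) = Tr_{𝔽_q/𝔽_p}(P.nextCoeff)`. Then `Q(T) = P(T^p − T)` is monic irreducible of degree
`p·d` in `𝔽_q[T]`. -/
theorem stmt_3 (p s : ℕ) [Fact p.Prime] (F : Type*) [Field F] [Fintype F]
    [Algebra (ZMod p) F] (hq : Fintype.card F = p ^ s)
    (P : Polynomial F) (hP : P.Monic) (hirr : Irreducible P) (d : ℕ) (hd : P.natDegree = d)
    (hi : Algebra.trace (ZMod p) F P.nextCoeff ≠ 0) :
    (P.comp (Polynomial.X ^ p - Polynomial.X)).Monic ∧
      Irreducible (P.comp (Polynomial.X ^ p - Polynomial.X)) ∧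
      (P.comp (Polynomial.X ^ p - Polynomial.X)).natDegree = p * d := by
  have hp : p.Prime := Fact.out
  have hdeg := FiniteField.X_pow_card_sub_X_natDegree_eq F hp.one_lt
  have hm : (Polynomial.X ^ p - Polynomial.X : Polynomial F).Monic := by
    apply Polynomial.monic_X_pow_sub
    rw [Polynomial.degree_X]
    exact_mod_cast hp.one_lt
  refine ⟨hP.comp hm (by rw [hdeg]; exact hp.ne_zero), ?_, ?_⟩
  · apply Polynomial.irreducible_comp hP hm hirr
    intro E _ _ x hx
    have hint : IsIntegral F x := by
      by_contra h
      rw [minpoly.eq_zero h] at hx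
      exact hirr.ne_zero hx.symm
    have hfin : FiniteDimensional F (IntermediateField.adjoin F {x}) :=
      IntermediateField.adjoin.finiteDimensional hint
    have : Finite (IntermediateField.adjoin F {x}) := Module.finite_of_finite F
    letI : Algebra (ZMod p) (IntermediateField.adjoin F {x}) :=
      ((algebraMap F (IntermediateField.adjoin F {x})).comp (algebraMap (ZMod p) F)).toAlgebra
    haveI : IsScalarTower (ZMod p) F (IntermediateField.adjoin F {x}) :=
      IsScalarTower.of_algebraMap_eq' rfl
    have key := artinSchreier_irreducible p (IntermediateField.adjoin F {x})
      (IntermediateField.AdjoinSimple.gen F x) (by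
        rw [← Algebra.trace_trace (S := F), trace_adjoinSimpleGen hint, hx, map_neg]
        exact neg_ne_zero.2 hi)
    simpa using key
  · rw [Polynomial.natDegree_comp, hdeg, hd, mul_comm]
end

section
/- Let P ∈ 𝔽_q[T] be monic irreducible of degree d, and let n be a positive integer not divisible by q−1 which is a multiple of (q^d−1)/(q−1). Then the residue class of β(n) in the field 𝔽_q[T]/(P) lies in the subfield 𝔽_q; equivalently, (β(n) mod P)^q = β(n) mod P. -/
/-- Let `P ∈ 𝔽_q[T]` be monic irreducible of degree `d` and let `n` be a positive integer not
divisible by `q − 1` which is a multiple of `(q^d − 1)/(q − 1)`. Then the residue class of the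
Bernoulli–Goss value `β(n) = Σ_{m ≥ 0} Σ_{a ∈ A_m} a^n` in `𝔽_q[T]/(P)` lies in the subfield
`𝔽_q`, i.e. `(β(n) mod P)^q = β(n) mod P`. -/
theorem stmt_4 (p s : ℕ) [Fact p.Prime] (F : Type*) [Field F] [Fintype F]
    (hq : Fintype.card F = p ^ s)
    (P : Polynomial F) (hP : P.Monic) (hirr : Irreducible P) (d : ℕ) (hd : P.natDegree = d)
    (n : ℕ) (hn : 0 < n) (hndvd : ¬ (Fintype.card F - 1) ∣ n)
    (hmult : ((Fintype.card F ^ d - 1) / (Fintype.card F - 1)) ∣ n) :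
    (Ideal.Quotient.mk (Ideal.span {P})
        (∑ᶠ m : ℕ, ∑ᶠ a ∈ {a : Polynomial F | a.Monic ∧ a.natDegree = m}, a ^ n))
        ^ (Fintype.card F) =
      Ideal.Quotient.mk (Ideal.span {P})
        (∑ᶠ m : ℕ, ∑ᶠ a ∈ {a : Polynomial F | a.Monic ∧ a.natDegree = m}, a ^ n) := by
  have hmax : (Ideal.span {P}).IsMaximal :=
    PrincipalIdealRing.isMaximal_of_irreducible hirr
  letI : Field (Polynomial F ⧸ Ideal.span {P}) := Ideal.Quotient.field _
  have hadd : ∀ x y : Polynomial F ⧸ Ideal.span {P},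
      (x + y) ^ Fintype.card F = x ^ Fintype.card F + y ^ Fintype.card F := fun x y =>
    map_add (FiniteField.frobeniusAlgHom F (Polynomial F ⧸ Ideal.span {P})) x y
  have hfin : Module.Finite F (Polynomial F ⧸ Ideal.span {P}) := hP.finite_quotient
  have hfinite : Finite (Polynomial F ⧸ Ideal.span {P}) := Module.finite_of_finite F
  letI := Fintype.ofFinite (Polynomial F ⧸ Ideal.span {P})
  have hcard : Fintype.card (Polynomial F ⧸ Ideal.span {P}) = Fintype.card F ^ d := by
    rw [← Nat.card_eq_fintype_card, Module.natCard_eq_pow_finrank (K := F),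
      finrank_quotient_span_eq_natDegree, hd, Nat.card_eq_fintype_card]
  have hq1 : 1 < Fintype.card F := Fintype.one_lt_card
  have hdvd : Fintype.card F ^ d - 1 ∣ n * (Fintype.card F - 1) := by
    have h : Fintype.card F - 1 ∣ Fintype.card F ^ d - 1 := by
      simpa using Nat.sub_dvd_pow_sub_pow (Fintype.card F) 1 d
    have := Nat.mul_dvd_mul_right hmult (Fintype.card F - 1)
    rwa [Nat.div_mul_cancel h] at this
  have hpow : ∀ x : Polynomial F ⧸ Ideal.span {P}, (x ^ n) ^ Fintype.card F = x ^ n := by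
    intro x
    by_cases hx : x = 0
    · rw [hx, zero_pow hn.ne', zero_pow (by omega)]
    · have h1 : x ^ (n * (Fintype.card F - 1)) = 1 := by
        obtain ⟨k, hk⟩ := hdvd
        rw [hk, pow_mul, ← hcard, FiniteField.pow_card_sub_one_eq_one x hx, one_pow]
      obtain ⟨r, hr⟩ : ∃ r, Fintype.card F = r + 1 := ⟨Fintype.card F - 1, by omega⟩
      rw [hr] at h1 ⊢
      rw [pow_succ, ← pow_mul]
      simp only [Nat.add_sub_cancel] at h1
      rw [h1, one_mul]
  have h0 : (Ideal.Quotient.mk (Ideal.span {P}) 0) ^ Fintype.card F =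
      Ideal.Quotient.mk (Ideal.span {P}) 0 := by
    rw [map_zero, zero_pow (by omega)]
  have h2 : ∀ a b : Polynomial F,
      (Ideal.Quotient.mk (Ideal.span {P}) a) ^ Fintype.card F =
        Ideal.Quotient.mk (Ideal.span {P}) a →
      (Ideal.Quotient.mk (Ideal.span {P}) b) ^ Fintype.card F =
        Ideal.Quotient.mk (Ideal.span {P}) b →
      (Ideal.Quotient.mk (Ideal.span {P}) (a + b)) ^ Fintype.card F =
        Ideal.Quotient.mk (Ideal.span {P}) (a + b) := by
    intro a b ha hb
    rw [map_add, hadd, ha, hb]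
  refine finsum_induction (fun b : Polynomial F =>
    (Ideal.Quotient.mk (Ideal.span {P}) b) ^ Fintype.card F =
      Ideal.Quotient.mk (Ideal.span {P}) b) h0 h2 fun m => ?_
  refine finsum_mem_induction (fun b : Polynomial F =>
    (Ideal.Quotient.mk (Ideal.span {P}) b) ^ Fintype.card F =
      Ideal.Quotient.mk (Ideal.span {P}) b) h0 h2 fun a _ => ?_
  rw [map_pow]
  exact hpow _
end

section
/- Let P ∈ 𝔽_q[T] be monic irreducible of degree d, and let n be a positive integer which is a multiple of (q^d−1)/(q−1). Then the residue class of γ(n) in the field 𝔽_q[T]/(P) lies in the subfield 𝔽_q; equivalently, (γ(n) mod P)^q = γ(n) mod P. -/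
theorem aux_pow {F : Type*} [Field F] [Fintype F] (P : Polynomial F) (hirr : Irreducible P)
    (n : ℕ) (hn : 0 < n)
    (hmult : ((Fintype.card F ^ P.natDegree - 1) / (Fintype.card F - 1)) ∣ n)
    (x : AdjoinRoot P) : (x ^ n) ^ Fintype.card F = x ^ n := by
  haveI : Fact (Irreducible P) := ⟨hirr⟩
  by_cases hx : x = 0
  · subst hx
    rw [zero_pow hn.ne', zero_pow Fintype.card_ne_zero]
  have pb := AdjoinRoot.powerBasis hirr.ne_zero
  haveI : Module.Finite F (AdjoinRoot P) := (AdjoinRoot.powerBasis hirr.ne_zero).finite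
  haveI : Finite (AdjoinRoot P) := Module.finite_of_finite F
  haveI := Fintype.ofFinite (AdjoinRoot P)
  have hcard : Fintype.card (AdjoinRoot P) = Fintype.card F ^ P.natDegree := by
    rw [Module.card_eq_pow_finrank (K := F) (V := AdjoinRoot P),
      (AdjoinRoot.powerBasis hirr.ne_zero).finrank, AdjoinRoot.powerBasis_dim]
  have h1 : x ^ (Fintype.card F ^ P.natDegree - 1) = 1 := by
    rw [← hcard]; exact FiniteField.pow_card_sub_one_eq_one x hx
  have hdvd : Fintype.card F - 1 ∣ Fintype.card F ^ P.natDegree - 1 := by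
    simpa using Nat.sub_dvd_pow_sub_pow (Fintype.card F) 1 P.natDegree
  have h2 : Fintype.card F ^ P.natDegree - 1 ∣ n * (Fintype.card F - 1) := by
    rw [← Nat.div_mul_cancel hdvd]
    exact Nat.mul_dvd_mul_right hmult _
  obtain ⟨k, hk⟩ := h2
  have hq : Fintype.card F = (Fintype.card F - 1) + 1 :=
    (Nat.sub_add_cancel Fintype.card_pos).symm
  rw [hq, pow_succ, ← pow_mul, hk, pow_mul, h1, one_pow, one_mul]

/-- Let `P ∈ 𝔽_q[T]` be monic irreducible of degree `d` and let `n` be a positive integer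
which is a multiple of `(q^d − 1)/(q − 1)`. Then the residue class of
`γ(n) = Σ_{m ≥ 0} Σ_{a ∈ A_m} i(a)·a^n` in `𝔽_q[T]/(P)` lies in the subfield `𝔽_q`,
i.e. `(γ(n) mod P)^q = γ(n) mod P`. Here `i(a) = Tr_{𝔽_q/𝔽_p}(a.nextCoeff) ∈ ℤ/pℤ`
is viewed in `𝔽_q`. -/
theorem stmt_5 (p s : ℕ) [Fact p.Prime] (F : Type*) [Field F] [Fintype F]
    [Algebra (ZMod p) F] (hq : Fintype.card F = p ^ s)
    (P : Polynomial F) (hP : P.Monic) (hirr : Irreducible P) (d : ℕ) (hd : P.natDegree = d)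
    (n : ℕ) (hn : 0 < n)
    (hmult : ((Fintype.card F ^ d - 1) / (Fintype.card F - 1)) ∣ n) :
    (Ideal.Quotient.mk (Ideal.span {P})
        (∑ᶠ m : ℕ, ∑ᶠ a ∈ {a : Polynomial F | a.Monic ∧ a.natDegree = m},
          Polynomial.C (algebraMap (ZMod p) F (Algebra.trace (ZMod p) F a.nextCoeff)) * a ^ n))
        ^ (Fintype.card F) =
      Ideal.Quotient.mk (Ideal.span {P})
        (∑ᶠ m : ℕ, ∑ᶠ a ∈ {a : Polynomial F | a.Monic ∧ a.natDegree = m},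
          Polynomial.C (algebraMap (ZMod p) F (Algebra.trace (ZMod p) F a.nextCoeff)) * a ^ n) := by
  subst hd
  have key : ∀ f : Polynomial F, (Ideal.Quotient.mk (Ideal.span {P}) f) ^ Fintype.card F
      = FiniteField.frobeniusAlgHom F (Polynomial F ⧸ Ideal.span {P})
        (Ideal.Quotient.mk (Ideal.span {P}) f) := fun f => rfl
  have h0 : (Ideal.Quotient.mk (Ideal.span {P}) 0) ^ Fintype.card F
      = Ideal.Quotient.mk (Ideal.span {P}) 0 := by rw [key]; simp only [map_zero]
  have hadd : ∀ f g : Polynomial F,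
      (Ideal.Quotient.mk (Ideal.span {P}) f) ^ Fintype.card F = Ideal.Quotient.mk (Ideal.span {P}) f →
      (Ideal.Quotient.mk (Ideal.span {P}) g) ^ Fintype.card F = Ideal.Quotient.mk (Ideal.span {P}) g →
      (Ideal.Quotient.mk (Ideal.span {P}) (f + g)) ^ Fintype.card F
        = Ideal.Quotient.mk (Ideal.span {P}) (f + g) := by
    intro f g hf hg
    rw [key] at *
    rw [map_add, map_add, hf, hg]
  refine finsum_induction (fun f : Polynomial F => (Ideal.Quotient.mk (Ideal.span {P}) f)
    ^ Fintype.card F = Ideal.Quotient.mk (Ideal.span {P}) f) h0 hadd fun m => ?_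
  refine finsum_mem_induction (fun f : Polynomial F => (Ideal.Quotient.mk (Ideal.span {P}) f)
    ^ Fintype.card F = Ideal.Quotient.mk (Ideal.span {P}) f) h0 hadd fun a _ => ?_
  rw [map_mul, mul_pow, ← map_pow, ← Polynomial.C_pow, FiniteField.pow_card, map_pow]
  congr 1
  exact aux_pow P hirr n hn hmult (AdjoinRoot.mk P a)
end

section
/- In 𝔽_3[T], the partial sums Σ_{m=0}^{M} Σ_{a∈A_m} a^{13} are eventually constant in M, with eventual value β(13) = −T^9 − T^3 − T + 1, and the polynomial P = T^3 − T^2 + 1 divides β(13). -/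
open Polynomial

noncomputable def monF : ℕ → Finset (Polynomial (ZMod 3))
  | 0 => {1}
  | m + 1 => by
      classical
      exact (monF m ×ˢ (Finset.univ : Finset (ZMod 3))).image (fun p => p.1 * X + C p.2)

theorem monF_inj : Function.Injective
    (fun p : Polynomial (ZMod 3) × ZMod 3 => p.1 * X + C p.2) := by
  rintro ⟨a, c⟩ ⟨b, d⟩ h
  have h1 := congrArg (fun p => p.coeff 0) h
  simp at h1
  subst h1
  have h2 : a * X = b * X := add_right_cancel h
  rw [mul_right_cancel₀ X_ne_zero h2]

theorem mem_monF (m : ℕ) (a : Polynomial (ZMod 3)) :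
    a ∈ monF m ↔ a.Monic ∧ a.natDegree = m := by
  induction m generalizing a with
  | zero =>
    simp only [monF, Finset.mem_singleton]
    constructor
    · rintro rfl; simp
    · rintro ⟨h, h'⟩; exact h.natDegree_eq_zero.mp h'
  | succ m ih =>
    simp only [monF, Finset.mem_image, Finset.mem_product, Finset.mem_univ, and_true, Prod.exists]
    constructor
    · rintro ⟨b, c, hb, rfl⟩
      obtain ⟨h1, h2⟩ := (ih b).1 hb
      have h3 : (b * X).Monic := h1.mul monic_X
      have h4 : (b * X).natDegree = m + 1 := by
        rw [h1.natDegree_mul monic_X, h2, natDegree_X]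
      refine ⟨h3.add_of_left ?_, ?_⟩
      · refine lt_of_le_of_lt degree_C_le ?_
        rw [degree_eq_natDegree h3.ne_zero, h4]
        exact_mod_cast Nat.succ_pos m
      · rw [natDegree_add_C, h4]
    · rintro ⟨h1, h2⟩
      refine ⟨a.divX, a.coeff 0, (ih _).2 ⟨?_, ?_⟩, divX_mul_X_add a⟩
      · rw [Monic, leadingCoeff, natDegree_divX_eq_natDegree_tsub_one, coeff_divX, h2]
        rw [Monic, leadingCoeff, h2] at h1
        exact h1
      · rw [natDegree_divX_eq_natDegree_tsub_one, h2]; rfl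

theorem finsum_monF (m : ℕ) (f : Polynomial (ZMod 3) → Polynomial (ZMod 3)) :
    ∑ᶠ a ∈ {a : Polynomial (ZMod 3) | a.Monic ∧ a.natDegree = m}, f a = ∑ a ∈ monF m, f a := by
  rw [← finsum_mem_coe_finset]
  congr! 3 with a
  simp [mem_monF]

theorem sum_monF_succ (m : ℕ) (f : Polynomial (ZMod 3) → Polynomial (ZMod 3)) :
    ∑ a ∈ monF (m + 1), f a = ∑ b ∈ monF m, (f (b * X) + f (b * X + 1) + f (b * X - 1)) := by
  classical
  rw [monF, Finset.sum_image (fun _ _ _ _ h => monF_inj h), Finset.sum_product]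
  refine Finset.sum_congr rfl fun b _ => ?_
  have h : (Finset.univ : Finset (ZMod 3)) = {0, 1, -1} := by decide
  rw [h, Finset.sum_insert (by decide), Finset.sum_insert (by decide), Finset.sum_singleton]
  simp [sub_eq_add_neg, add_assoc]

theorem three_zero : (3 : Polynomial (ZMod 3)) = 0 := by
  exact_mod_cast CharP.cast_eq_zero (Polynomial (ZMod 3)) 3

theorem pow13 (x : Polynomial (ZMod 3)) : x ^ 13 = x * x ^ 3 * (x ^ 3) ^ 3 := by ring

theorem add3 (x y : Polynomial (ZMod 3)) : (x + y) ^ 3 = x ^ 3 + y ^ 3 :=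
  add_pow_char x y 3

theorem sub3 (x y : Polynomial (ZMod 3)) : (x - y) ^ 3 = x ^ 3 - y ^ 3 :=
  sub_pow_char x y

theorem fiber13 (u : Polynomial (ZMod 3)) :
    u ^ 13 + (u + 1) ^ 13 + (u - 1) ^ 13 = -(u + u ^ 3 + u ^ 9) := by
  simp only [pow13 u, pow13 (u + 1), pow13 (u - 1), add3, sub3, one_pow]
  linear_combination (u ^ 13 + u + u ^ 3 + u ^ 9) * three_zero

theorem vanish (m : ℕ) : ∑ a ∈ monF (m + 2), a ^ 13 = 0 := by
  rw [sum_monF_succ]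
  simp only [fiber13]
  rw [sum_monF_succ]
  refine Finset.sum_eq_zero fun b _ => ?_
  have h9 (x : Polynomial (ZMod 3)) : x ^ 9 = (x ^ 3) ^ 3 := by ring
  simp only [h9, add_mul, sub_mul, one_mul, add3, sub3]
  linear_combination (-(b * X * X + (b * X * X) ^ 3 + ((b * X * X) ^ 3) ^ 3)) * three_zero

/-- In `𝔽_3[T]`, the partial sums `Σ_{m=0}^{M} Σ_{a ∈ A_m} a^13` are eventually constant in
`M`, with eventual value `β(13) = −T^9 − T^3 − T + 1`, and `P = T^3 − T^2 + 1` divides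
`β(13)`. -/
theorem stmt_9 :
    (∃ M₀ : ℕ, ∀ M ≥ M₀,
      (∑ m ∈ Finset.range (M + 1),
        ∑ᶠ a ∈ {a : Polynomial (ZMod 3) | a.Monic ∧ a.natDegree = m}, a ^ 13) =
        (-X ^ 9 - X ^ 3 - X + 1 : Polynomial (ZMod 3))) ∧
    (X ^ 3 - X ^ 2 + 1 : Polynomial (ZMod 3)) ∣ (-X ^ 9 - X ^ 3 - X + 1) := by
  constructor
  · refine ⟨1, fun M hM => ?_⟩
    obtain ⟨k, rfl⟩ := Nat.exists_eq_add_of_le' hM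
    simp only [finsum_monF]
    rw [Finset.sum_range_succ', Finset.sum_range_succ',
      Finset.sum_eq_zero (fun i _ => vanish i), sum_monF_succ]
    simp only [fiber13, monF, Finset.sum_singleton]
    ring
  · refine ⟨-X ^ 6 - X ^ 5 - X ^ 4 + X ^ 2 + 2 * X + 1, ?_⟩
    linear_combination (-X) * three_zero
end

section
/- In 𝔽_3[T], the partial sums Σ_{m=0}^{M} Σ_{a∈A_m} i(a)·a^{13} are eventually constant in M, with eventual value γ(13) = −T^{12} − T^{10} + T^9 − T^4 + T^3 + T − 1, and the polynomial P = T^3 − T^2 + 1 divides γ(13). -/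
open Polynomial

namespace Stmt10

lemma three0 : (3 : (ZMod 3)[X]) = 0 := by
  have := CharP.cast_eq_zero ((ZMod 3)[X]) 3
  exact_mod_cast this

/-- The monic polynomials of degree `m`, built recursively as `X * a + c`. -/
noncomputable def T : ℕ → Finset (ZMod 3)[X]
  | 0 => {1}
  | m + 1 => (T m ×ˢ (Finset.univ : Finset (ZMod 3))).image (fun p => X * p.1 + C p.2)

lemma inj : Function.Injective (fun p : (ZMod 3)[X] × ZMod 3 => X * p.1 + C p.2) := by
  rintro ⟨a, c⟩ ⟨b, d⟩ h
  have h' : X * a + C c = X * b + C d := h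
  have h0 : c = d := by simpa using congrArg (coeff · 0) h'
  subst h0
  have h1 : a = b := by
    ext n
    simpa [coeff_C] using congrArg (coeff · (n + 1)) h'
  rw [h1]

lemma natDeg (a : (ZMod 3)[X]) (ha : a.Monic) (c : ZMod 3) :
    (X * a + C c).natDegree = a.natDegree + 1 := by
  rw [natDegree_add_C, natDegree_X_mul ha.ne_zero]

lemma mon (a : (ZMod 3)[X]) (ha : a.Monic) (c : ZMod 3) : (X * a + C c).Monic := by
  unfold Monic leadingCoeff
  rw [natDeg a ha c]
  simpa [coeff_C] using ha.leadingCoeff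

lemma mem_T (m : ℕ) (a : (ZMod 3)[X]) : a ∈ T m ↔ a.Monic ∧ a.natDegree = m := by
  induction m generalizing a with
  | zero =>
    simp only [T, Finset.mem_singleton]
    constructor
    · rintro rfl; simp
    · rintro ⟨h1, h2⟩; exact h1.natDegree_eq_zero.mp h2
  | succ m ih =>
    simp only [T, Finset.mem_image, Finset.mem_product, Finset.mem_univ, and_true, Prod.exists]
    constructor
    · rintro ⟨b, c, hb, rfl⟩
      obtain ⟨h1, h2⟩ := (ih b).1 hb
      exact ⟨mon b h1 c, by rw [natDeg b h1 c, h2]⟩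
    · rintro ⟨h1, h2⟩
      have e : X * a.divX + C (a.coeff 0) = a := X_mul_divX_add a
      have hd : a.divX.natDegree = m := by rw [natDegree_divX_eq_natDegree_tsub_one, h2]; rfl
      refine ⟨a.divX, a.coeff 0, (ih _).2 ⟨?_, hd⟩, e⟩
      unfold Monic leadingCoeff
      rw [hd, coeff_divX, ← h2]
      exact h1

lemma sum_T_succ (m : ℕ) (f : (ZMod 3)[X] → (ZMod 3)[X]) :
    ∑ a ∈ T (m + 1), f a = ∑ a ∈ T m, ∑ c : ZMod 3, f (X * a + C c) := by
  rw [T, Finset.sum_image (fun _ _ _ _ h => inj h), Finset.sum_product]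

lemma next (m : ℕ) (a : (ZMod 3)[X]) (ha : a ∈ T (m + 1)) (c : ZMod 3) :
    (X * a + C c).nextCoeff = a.nextCoeff := by
  obtain ⟨h1, h2⟩ := (mem_T _ _).1 ha
  rw [nextCoeff_of_natDegree_pos (by rw [natDeg a h1]; omega),
    nextCoeff_of_natDegree_pos (by omega), natDeg a h1, h2]
  simp

lemma next1 (c : ZMod 3) : (X * 1 + C c : (ZMod 3)[X]).nextCoeff = c := by
  rw [mul_one, nextCoeff_X_add_C]

lemma sum3 (f : ZMod 3 → (ZMod 3)[X]) : ∑ c, f c = f 0 + f 1 + f (-1) :=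
  Fin.sum_univ_three f

lemma pow13 (a b : (ZMod 3)[X]) :
    (a + b) ^ 13 = (a + b) * (a ^ 3 + b ^ 3) * (a ^ 9 + b ^ 9) := by
  have h3 : (a + b) ^ 3 = a ^ 3 + b ^ 3 := add_pow_char a b 3
  have h9 : (a + b) ^ 9 = a ^ 9 + b ^ 9 := by
    have := add_pow_char (a ^ 3) (b ^ 3) 3
    rw [← h3] at this
    simpa [← pow_mul] using this
  rw [← h3, ← h9]; ring

lemma inner (a : (ZMod 3)[X]) :
    ∑ d : ZMod 3, (a + C d) ^ 13 = -(a + a ^ 3 + a ^ 9) := by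
  rw [sum3]
  simp only [pow13, map_zero, map_one, map_neg]
  linear_combination (a ^ 13 + (a + a ^ 3 + a ^ 9)) * three0

lemma additive (a : (ZMod 3)[X]) (c : ZMod 3) :
    (a + C c) + (a + C c) ^ 3 + (a + C c) ^ 9 = a + a ^ 3 + a ^ 9 := by
  have h3 : (a + C c) ^ 3 = a ^ 3 + C c ^ 3 := add_pow_char a _ 3
  have h9 : (a + C c) ^ 9 = a ^ 9 + C c ^ 9 := by
    have := add_pow_char (a ^ 3) (C c ^ 3) 3
    rw [← h3] at this
    simpa [← pow_mul] using this
  have k3 : (C c : (ZMod 3)[X]) ^ 3 = C c := by rw [← C_pow, ZMod.pow_card]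
  have k9 : (C c : (ZMod 3)[X]) ^ 9 = C c := by
    rw [show 9 = 3 * 3 from rfl, pow_mul, k3, k3]
  rw [h3, h9, k3, k9]
  linear_combination C c * three0

lemma lin (a b : (ZMod 3)[X]) : (a + b) + (a + b) ^ 3 + (a + b) ^ 9
    = (a + a ^ 3 + a ^ 9) + (b + b ^ 3 + b ^ 9) := by
  have h3 : (a + b) ^ 3 = a ^ 3 + b ^ 3 := add_pow_char a b 3
  have h9 : (a + b) ^ 9 = a ^ 9 + b ^ 9 := by
    have := add_pow_char (a ^ 3) (b ^ 3) 3
    rw [← h3] at this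
    simpa [← pow_mul] using this
  rw [h3, h9]; ring

/-- The inner sum. -/
noncomputable def S (m : ℕ) : (ZMod 3)[X] := ∑ a ∈ T m, C a.nextCoeff * a ^ 13

lemma S0 : S 0 = 0 := by simp [S, T, nextCoeff]

lemma S1 : S 1 = - X ^ 12 - X ^ 10 - X ^ 4 - 1 := by
  rw [S, sum_T_succ]
  simp only [T, Finset.sum_singleton, next1]
  rw [sum3]
  simp only [pow13, map_zero, map_one, map_neg, mul_one]
  linear_combination (X ^ 12 + X ^ 10 + X ^ 4 + 1) * three0

lemma Sstep (m : ℕ) : S (m + 2) = ∑ b ∈ T (m + 1),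
    C b.nextCoeff * -(X * b + (X * b) ^ 3 + (X * b) ^ 9) := by
  rw [S, sum_T_succ]
  refine Finset.sum_congr rfl fun b hb => ?_
  simp only [next m b hb]
  rw [← Finset.mul_sum, inner]

lemma S2 : S 2 = X + X ^ 3 + X ^ 9 := by
  rw [Sstep, sum_T_succ]
  simp only [T, Finset.sum_singleton, next1]
  rw [sum3]
  simp only [mul_one, mul_add, lin, map_zero, map_one, map_neg]
  linear_combination (-(X + X ^ 3 + X ^ 9)) * three0

lemma S3 (m : ℕ) : S (m + 3) = 0 := by
  rw [Sstep, sum_T_succ]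
  refine Finset.sum_eq_zero fun b hb => ?_
  simp only [next m b hb]
  rw [sum3]
  simp only [mul_add X, lin, map_zero, map_one, map_neg]
  linear_combination (-C b.nextCoeff * (X * (X * b) + (X * (X * b)) ^ 3 + (X * (X * b)) ^ 9))
    * three0

lemma finsum_eq (m : ℕ) :
    ∑ᶠ a ∈ {a : (ZMod 3)[X] | a.Monic ∧ a.natDegree = m}, C a.nextCoeff * a ^ 13 = S m := by
  have : {a : (ZMod 3)[X] | a.Monic ∧ a.natDegree = m} = (T m : Set (ZMod 3)[X]) := by
    ext a; simp [mem_T]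
  rw [this, finsum_mem_coe_finset, S]

end Stmt10

/-- In `𝔽_3[T]`, the partial sums `Σ_{m=0}^{M} Σ_{a ∈ A_m} i(a)·a^13` are eventually constant
in `M`, with eventual value `γ(13) = −T^12 − T^10 + T^9 − T^4 + T^3 + T − 1`, and
`P = T^3 − T^2 + 1` divides `γ(13)`. Here `i(a) = a.nextCoeff` is the coefficient of
`T^(deg a − 1)` (and `i(a) = 0` for `deg a = 0`), an element of `𝔽_3 = ℤ/3ℤ`. -/
theorem stmt_10 :
    (∃ M₀ : ℕ, ∀ M ≥ M₀,
      (∑ m ∈ Finset.range (M + 1),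
        ∑ᶠ a ∈ {a : Polynomial (ZMod 3) | a.Monic ∧ a.natDegree = m},
          Polynomial.C a.nextCoeff * a ^ 13) =
        (-X ^ 12 - X ^ 10 + X ^ 9 - X ^ 4 + X ^ 3 + X - 1 : Polynomial (ZMod 3))) ∧
    (X ^ 3 - X ^ 2 + 1 : Polynomial (ZMod 3)) ∣
      (-X ^ 12 - X ^ 10 + X ^ 9 - X ^ 4 + X ^ 3 + X - 1) := by
  refine ⟨⟨2, fun M hM => ?_⟩, ?_⟩
  · simp only [Stmt10.finsum_eq]
    obtain ⟨k, rfl⟩ := Nat.exists_eq_add_of_le hM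
    induction k with
    | zero =>
      simp only [Finset.sum_range_succ, Finset.sum_range_zero, Stmt10.S0, Stmt10.S1, Stmt10.S2]
      ring
    | succ k ih =>
      rw [Finset.sum_range_succ, show 2 + (k + 1) = (2 + k) + 1 by ring, ih (by omega),
        show 2 + k + 1 = k + 3 by ring, Stmt10.S3, add_zero]
  · refine ⟨(-1) * X ^ 9 + (-1) * X ^ 8 + (1) * X ^ 7 + (1) * X ^ 5 + (-1) * X ^ 2 + (1) * X ^ 1 + (-1) * X ^ 0, ?_⟩
    linear_combination ((1) * X ^ 3 + (-1) * X ^ 4 + (1) * X ^ 9 + (-1) * X ^ 10) * Stmt10.three0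
end

section
/- Let K = 𝔽_q(X) be the field of rational functions over 𝔽_q and let F = 𝔽_q(X^p − X) ⊆ K be the subfield generated over 𝔽_q by X^p − X. Then K/F is a Galois extension of degree p, and the map ℤ/pℤ → Gal(K/F) sending n to the 𝔽_q-automorphism of K determined by X ↦ X − n (with n viewed in 𝔽_p ⊆ 𝔽_q) is an isomorphism of groups. -/
open Polynomial

/-- The automorphism `X ↦ X - n` of `F(X)`. -/
noncomputable def shiftEquiv {F : Type} [Field F] (a : F) : RatFunc F ≃ₐ[F] RatFunc F :=
  IsFractionRing.algEquivOfAlgEquiv (A := F[X]) (B := F[X]) (algEquivAevalXAddC (-a))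

lemma shiftEquiv_X {F : Type} [Field F] (a : F) :
    shiftEquiv a (RatFunc.X) = RatFunc.X - algebraMap F (RatFunc F) a := by
  rw [shiftEquiv, ← RatFunc.algebraMap_X, IsFractionRing.algEquivOfAlgEquiv_algebraMap]
  simp [algEquivAevalXAddC, sub_eq_add_neg]

lemma ratFunc_algEquiv_ext {F : Type} [Field F] (E : IntermediateField F (RatFunc F))
    (σ τ : RatFunc F ≃ₐ[E] RatFunc F) (h : σ RatFunc.X = τ RatFunc.X) : σ = τ := by
  have hle : (⊤ : IntermediateField E (RatFunc F)) ≤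
      IntermediateField.adjoin E {(RatFunc.X : RatFunc F)} :=
    (RatFunc.IntermediateField.adjoin_X E).ge
  ext x
  have hx : x ∈ IntermediateField.adjoin E {(RatFunc.X : RatFunc F)} := hle trivial
  induction hx using IntermediateField.adjoin_induction with
  | mem x hx => rw [Set.mem_singleton_iff.mp hx, h]
  | algebraMap x => simp only [AlgEquiv.commutes]
  | add x y _ _ hx hy => simp only [map_add, hx, hy]
  | inv x _ hx => simp only [map_inv₀, hx]
  | mul x y _ _ hx hy => simp only [map_mul, hx, hy]

lemma finrank_artin (p : ℕ) [hp : Fact p.Prime] (F : Type) [Field F] :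
    Module.finrank (IntermediateField.adjoin F {(RatFunc.X ^ p - RatFunc.X : RatFunc F)})
      (RatFunc F) = p := by
  have h : (RatFunc.X ^ p - RatFunc.X : RatFunc F) =
      algebraMap F[X] (RatFunc F) (X ^ p - X) := by simp
  rw [RatFunc.finrank_eq_max_natDegree, h, RatFunc.num_algebraMap, RatFunc.denom_algebraMap,
    FiniteField.X_pow_card_sub_X_natDegree_eq F hp.out.one_lt]
  simp

lemma shiftEquiv_mem (p : ℕ) [Fact p.Prime] (F : Type) [Field F] [Algebra (ZMod p) F]
    (n : ZMod p) : shiftEquiv (algebraMap (ZMod p) F n) ∈ IntermediateField.fixingSubgroup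
      (IntermediateField.adjoin F {(RatFunc.X ^ p - RatFunc.X : RatFunc F)}) := by
  have : CharP F p := charP_of_injective_algebraMap (algebraMap (ZMod p) F).injective p
  have : CharP (RatFunc F) p :=
    charP_of_injective_algebraMap (algebraMap F (RatFunc F)).injective p
  rw [IntermediateField.mem_fixingSubgroup_iff]
  intro x hx
  induction hx using IntermediateField.adjoin_induction with
  | mem x hx =>
    rw [Set.mem_singleton_iff.mp hx, map_sub, map_pow, shiftEquiv_X, sub_pow_char,
      ← map_pow, ← map_pow, ZMod.pow_card]
    ring
  | algebraMap x => simp only [AlgEquiv.commutes]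
  | add x y _ _ hx hy => simp only [map_add, hx, hy]
  | inv x _ hx => simp only [map_inv₀, hx]
  | mul x y _ _ hx hy => simp only [map_mul, hx, hy]

/-- Let `K = 𝔽_q(X)` and let `E = 𝔽_q(X^p − X) ⊆ K` be the subfield generated over `𝔽_q` by
`X^p − X`. Then `K/E` is Galois of degree `p`, and `n ↦ (X ↦ X − n)` is a group isomorphism
`ℤ/pℤ ≃ Gal(K/E)` (an automorphism in `Gal(K/E)` fixes `𝔽_q ⊆ E` and is determined by the
image of `X`). -/
theorem stmt_12 (p s : ℕ) [Fact p.Prime] (F : Type) [Field F] [Fintype F]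
    [Algebra (ZMod p) F] (hq : Fintype.card F = p ^ s)
    (E : IntermediateField F (RatFunc F))
    (hE : E = IntermediateField.adjoin F {(RatFunc.X ^ p - RatFunc.X : RatFunc F)}) :
    IsGalois E (RatFunc F) ∧ Module.finrank E (RatFunc F) = p ∧
    ∃ φ : Multiplicative (ZMod p) ≃* (RatFunc F ≃ₐ[E] RatFunc F),
      ∀ n : ZMod p,
        (φ (Multiplicative.ofAdd n)) RatFunc.X =
          RatFunc.X - algebraMap F (RatFunc F) (algebraMap (ZMod p) F n) := by
  have hp : p.Prime := Fact.out
  have hfin : Module.finrank E (RatFunc F) = p := by subst hE; exact finrank_artin p F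
  have hmem : ∀ n : ZMod p, shiftEquiv (algebraMap (ZMod p) F n) ∈ E.fixingSubgroup := by
    subst hE; exact shiftEquiv_mem p F
  have : FiniteDimensional E (RatFunc F) :=
    FiniteDimensional.of_finrank_pos (hfin ▸ hp.pos)
  let f : ZMod p → (RatFunc F ≃ₐ[E] RatFunc F) := fun n =>
    IntermediateField.fixingSubgroupEquiv E ⟨_, hmem n⟩
  have hf : ∀ n, f n RatFunc.X =
      RatFunc.X - algebraMap F (RatFunc F) (algebraMap (ZMod p) F n) :=
    fun n => shiftEquiv_X _
  have hc : ∀ n (a : F), f n (algebraMap F (RatFunc F) a) = algebraMap F (RatFunc F) a :=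
    fun n a => (shiftEquiv (algebraMap (ZMod p) F n)).commutes a
  let g : Multiplicative (ZMod p) →* (RatFunc F ≃ₐ[E] RatFunc F) :=
    MonoidHom.mk' (fun n => f n.toAdd) (by
      intro a b
      apply ratFunc_algEquiv_ext
      rw [AlgEquiv.mul_apply, hf, hf, map_sub, hc, hf, toAdd_mul, map_add, map_add]
      ring)
  have hg : Function.Injective g := by
    intro a b hab
    have h1 : f a.toAdd RatFunc.X = f b.toAdd RatFunc.X := DFunLike.congr_fun hab RatFunc.X
    rw [hf, hf] at h1
    exact Multiplicative.toAdd.injective ((algebraMap (ZMod p) F).injective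
      ((algebraMap F (RatFunc F)).injective (sub_right_injective h1)))
  have hcard : Nat.card (RatFunc F ≃ₐ[E] RatFunc F) ≤ Nat.card (Multiplicative (ZMod p)) := by
    have h1 : Nat.card (Multiplicative (ZMod p)) = p := by
      rw [Nat.card_congr Multiplicative.toAdd, Nat.card_zmod]
    rw [h1, Nat.card_eq_fintype_card]
    exact (AlgEquiv.card_le (F := E) (K := RatFunc F)).trans_eq hfin
  have hbij : Function.Bijective g := hg.bijective_of_nat_card_le hcard
  refine ⟨IsGalois.of_card_aut_eq_finrank _ _ ?_, hfin, MulEquiv.ofBijective g hbij, hf⟩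
  rw [hfin, ← Nat.card_congr (Equiv.ofBijective g hbij), Nat.card_congr Multiplicative.toAdd,
    Nat.card_zmod]
end

section
/- The integral closure of the subring 𝔽_q[X^p − X] inside the rational function field 𝔽_q(X) is equal to the polynomial ring 𝔽_q[X]. -/
/-- The integral closure of the subring `𝔽_q[X^p − X]` (the subalgebra of `𝔽_q(X)` generated
over `𝔽_q` by `X^p − X`) inside the rational function field `𝔽_q(X)` is equal to the
polynomial ring `𝔽_q[X]` (the subalgebra generated over `𝔽_q` by `X`). -/
theorem stmt_13 (p s : ℕ) [Fact p.Prime] (F : Type) [Field F] [Fintype F]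
    (hq : Fintype.card F = p ^ s)
    (S : Subalgebra F (RatFunc F))
    (hS : S = Algebra.adjoin F {(RatFunc.X ^ p - RatFunc.X : RatFunc F)}) :
    ((integralClosure S (RatFunc F) : Subalgebra S (RatFunc F)) : Set (RatFunc F)) =
      ((Algebra.adjoin F {(RatFunc.X : RatFunc F)} : Subalgebra F (RatFunc F)) :
        Set (RatFunc F)) := by
  have hp : 1 < p := (Fact.out : p.Prime).one_lt
  have hX : (RatFunc.X ^ p - RatFunc.X : RatFunc F) ∈ S := by
    rw [hS]; exact Algebra.self_mem_adjoin_singleton F _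
  have hle' : ∀ y ∈ S, ∃ g : Polynomial F, algebraMap (Polynomial F) (RatFunc F) g = y := by
    have : S ≤ (IsScalarTower.toAlgHom F (Polynomial F) (RatFunc F)).range := by
      rw [hS, Algebra.adjoin_le_iff, Set.singleton_subset_iff]
      exact ⟨Polynomial.X ^ p - Polynomial.X, by simp⟩
    intro y hy
    exact this hy
  ext x
  simp only [SetLike.mem_coe, mem_integralClosure_iff]
  constructor
  · rintro ⟨P, hP, hPx⟩
    have hl : P.map (algebraMap S (RatFunc F)) ∈
        Polynomial.lifts (algebraMap (Polynomial F) (RatFunc F)) := by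
      rw [Polynomial.lifts_iff_coeff_lifts]
      intro n
      rw [Polynomial.coeff_map]
      exact hle' _ (P.coeff n).2
    obtain ⟨Q, hQ, -, hQm⟩ := Polynomial.lifts_and_degree_eq_and_monic hl (hP.map _)
    have hint : IsIntegral (Polynomial F) x := by
      refine ⟨Q, hQm, ?_⟩
      rw [← Polynomial.eval_map, hQ, Polynomial.eval_map, hPx]
    obtain ⟨g, rfl⟩ := IsIntegrallyClosed.isIntegral_iff.mp hint
    have := Polynomial.aeval_mem_adjoin_singleton F (p := g) (RatFunc.X : RatFunc F)
    rwa [← RatFunc.algebraMap_X, Polynomial.aeval_algebraMap_apply, Polynomial.aeval_X_left_apply] at this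
  · intro hx
    induction hx using Algebra.adjoin_induction with
    | mem y hy =>
      obtain rfl := hy
      refine ⟨Polynomial.X ^ p - (Polynomial.X + Polynomial.C ⟨_, hX⟩), ?_, ?_⟩
      · apply Polynomial.monic_X_pow_sub
        rw [Polynomial.degree_X_add_C]
        exact_mod_cast hp
      · rw [Polynomial.eval₂_sub, Polynomial.eval₂_add, Polynomial.eval₂_X_pow, Polynomial.eval₂_X, Polynomial.eval₂_C]
        change RatFunc.X ^ p - (RatFunc.X + (RatFunc.X ^ p - RatFunc.X)) = (0 : RatFunc F)
        ring
    | algebraMap r =>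
      exact isIntegral_algebraMap (R := S) (x := algebraMap F S r)
    | add a b _ _ ha hb => exact ha.add hb
    | mul a b _ _ ha hb => exact ha.mul hb
end
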